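/- If X is a Banach space with the Radon–Nikodým property, then the set CNA(X) of Crawford number attaining operators is dense in L(X) with respect to the operator norm. -/

import Mathlib

noncomputable def crawford {𝕜 : Type*} [RCLike 𝕜] {E : Type*} [NormedAddCommGroup E]
    [NormedSpace 𝕜 E] (T : E →L[𝕜] E) : ℝ :=
  sInf {r : ℝ | ∃ (x : E) (f : E →L[𝕜] 𝕜), ‖x‖ = 1 ∧ ‖f‖ = 1 ∧ f x = 1 ∧ r = ‖f (T x)‖}

def CrawfordAttains {𝕜 : Type*} [RCLike 𝕜] {E : Type*} [NormedAddCommGroup E]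
    [NormedSpace 𝕜 E] (T : E →L[𝕜] E) : Prop :=
  ∃ (x : E) (f : E →L[𝕜] 𝕜), ‖x‖ = 1 ∧ ‖f‖ = 1 ∧ f x = 1 ∧ crawford T = ‖f (T x)‖

/-- The Radon–Nikodým property, via the standard geometric characterization:
every nonempty bounded subset is dentable. -/
def HasRNP (X : Type*) [NormedAddCommGroup X] [NormedSpace ℝ X] : Prop :=
  ∀ S : Set X, S.Nonempty → Bornology.IsBounded S → ∀ ε : ℝ, 0 < ε →
    ∃ x ∈ S, x ∉ closure (convexHull ℝ (S \ Metric.ball x ε))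

/-!
After a small rank-one perturbation, the infimum in the definition of the Crawford number is
attained because of Stegall's variational principle: in a space with the Radon–Nikodým property,
some functional `g` of small norm makes every minimizing net of `‖f (T x)‖ - g x` over the norming
pairs `(x, f)` converge in `x`, and weak-* compactness supplies a functional for the limit. Rotating
pairs by unimodular scalars replaces `g x` by `‖z x‖`, where `g = re z`. If `(a, k)` minimizes
`‖f (T x)‖ - ‖z x‖`, then subtracting from `T` the rank-one operator `x ↦ z x • (l • a)`, with
`‖l‖ ≤ 1` rotating `z a` against `k (T a)`, lowers the value at `(a, k)` by `‖z a‖` or down to zero,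
and at any other pair by at most `‖z x‖`.

Stegall's principle follows by Baire category once a single perturbation makes the approximate
minimizers lie in a small ball. Replacing the function by a convex Lipschitz minorant with the same
tilted infima, one applies dentability to the set of points having a small subgradient, which by
the Brøndsted–Rockafellar theorem comes close to every approximate minimizer. Tilting the
subgradient at the dented point in the direction of the slice forces the approximate minimizers into
the slice.
-/

open Bornology Filter Metric Set Topology

section ApproxMin

variable {α : Type*} {φ ψ : α → ℝ} {δ : ℝ}

/-- The point `a` minimizes `φ` up to an additive error `δ`. -/
def IsApproxMin (φ : α → ℝ) (δ : ℝ) (a : α) : Prop :=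
  ∀ b, φ a ≤ φ b + δ

/-- The filter of minimizing nets of `φ`. It is generated by the sets of approximate minimizers when
`φ` is bounded below; otherwise the infimum has a junk value. -/
noncomputable def minimizing (φ : α → ℝ) : Filter α :=
  comap φ (𝓝 (⨅ a, φ a))

theorem IsApproxMin.of_abs_sub_le {η : ℝ} {a : α} (ha : IsApproxMin φ δ a)
    (h : ∀ b, |φ b - ψ b| ≤ η) : IsApproxMin ψ (δ + 2 * η) a := fun b => by
  linarith [ha b, (abs_le.1 (h a)).1, (abs_le.1 (h b)).2]

theorem IsApproxMin.sub_div_le_of_isMinOn {h : α → ℝ} {t : ℝ} {a b : α}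
    (hb : IsApproxMin (fun c => φ c - t * h c) δ b) (ha : IsMinOn φ univ a) (ht : 0 < t) :
    h a - δ / t ≤ h b := by
  rw [sub_le_iff_le_add, ← sub_le_iff_le_add', le_div_iff₀ ht]
  linarith [hb a, isMinOn_univ_iff.1 ha b]

theorem exists_isApproxMin [Nonempty α] (hφ : BddBelow (range φ)) (hδ : 0 < δ) :
    ∃ a, IsApproxMin φ δ a := by
  obtain ⟨a, ha⟩ := exists_lt_of_ciInf_lt (lt_add_of_pos_right (⨅ a, φ a) hδ)
  exact ⟨a, fun b => ha.le.trans (by gcongr; exact ciInf_le hφ b)⟩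

theorem hasBasis_minimizing [Nonempty α] (hφ : BddBelow (range φ)) :
    (minimizing φ).HasBasis (fun δ => 0 < δ) (fun δ => {a | IsApproxMin φ δ a}) := by
  refine (nhds_basis_closedBall.comap φ).congr (fun _ => Iff.rfl) fun δ _ => ?_
  ext a
  have hinf : IsApproxMin φ δ a ↔ φ a ≤ (⨅ b, φ b) + δ := by
    rw [← sub_le_iff_le_add, le_ciInf_iff hφ]
    exact forall_congr' fun b => sub_le_iff_le_add.symm
  rw [mem_preimage, mem_closedBall, Real.dist_eq,
    abs_of_nonneg (sub_nonneg.2 (ciInf_le hφ a)), sub_le_iff_le_add']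
  exact hinf.symm

theorem minimizing_neBot [Nonempty α] (hφ : BddBelow (range φ)) : (minimizing φ).NeBot :=
  (hasBasis_minimizing hφ).neBot_iff.2 fun hδ => exists_isApproxMin hφ hδ

end ApproxMin

section Ekeland

variable {X : Type*} {φ : X → ℝ} {κ : ℝ} {x y z : X}

/-- The points reached from `x` by a move that lowers `φ` by at least `κ` times the distance
travelled. These are the upper sets of the order in Ekeland's variational principle. -/
def descentSet [PseudoMetricSpace X] (φ : X → ℝ) (κ : ℝ) (x : X) : Set X :=
  {y | φ y + κ * dist y x ≤ φ x}

section PseudoMetricSpace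

variable [PseudoMetricSpace X]

theorem self_mem_descentSet : x ∈ descentSet φ κ x := by
  simp [descentSet]

theorem descentSet_subset_of_mem (hκ : 0 ≤ κ) (hy : y ∈ descentSet φ κ x) :
    descentSet φ κ y ⊆ descentSet φ κ x := fun z hz => by
  have htriangle := mul_le_mul_of_nonneg_left (dist_triangle z y x) hκ
  simp only [descentSet, mem_ofPred_eq] at hy hz ⊢
  linarith

theorem isClosed_descentSet (hφ : LowerSemicontinuous φ) : IsClosed (descentSet φ κ x) := by
  have hcont : Continuous fun y => κ * dist y x := by fun_prop
  exact (hφ.add hcont.lowerSemicontinuous).isClosed_preimage (φ x)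

theorem exists_mem_descentSet_subset_closedBall (hφ : BddBelow (range φ)) (hκ : 0 < κ) (x : X)
    {r : ℝ} (hr : 0 < r) :
    ∃ y ∈ descentSet φ κ x, descentSet φ κ y ⊆ closedBall y r := by
  have : Nonempty (descentSet φ κ x) := ⟨⟨x, self_mem_descentSet⟩⟩
  obtain ⟨⟨y, hy⟩, hmin⟩ := exists_isApproxMin (φ := fun z : descentSet φ κ x => φ z)
    (hφ.mono (range_comp_subset_range _ φ)) (mul_pos hκ hr)
  refine ⟨y, hy, fun z hz => le_of_mul_le_mul_left ?_ hκ⟩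
  have hyz : φ y ≤ φ z + κ * r := hmin ⟨z, descentSet_subset_of_mem hκ.le hy hz⟩
  have hzy : φ z + κ * dist z y ≤ φ y := hz
  linarith

end PseudoMetricSpace

/-- **Ekeland's variational principle**. -/
theorem exists_forall_lt_add_mul_dist [MetricSpace X] [CompleteSpace X]
    (hφ : LowerSemicontinuous φ) (hbdd : BddBelow (range φ)) (hκ : 0 < κ) (x : X) :
    ∃ y, φ y + κ * dist y x ≤ φ x ∧ ∀ z, z ≠ y → φ y < φ z + κ * dist z y := by
  choose next hnext hball using fun (n : ℕ) x =>
    exists_mem_descentSet_subset_closedBall hbdd hκ x (Nat.one_div_pos_of_nat (α := ℝ) (n := n))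
  let u : ℕ → X := Nat.rec x next
  let D : ℕ → Set X := fun n => descentSet φ κ (u n)
  have hanti : Antitone D :=
    antitone_nat_of_succ_le fun n => descentSet_subset_of_mem hκ.le (hnext n (u n))
  have hD : ∀ n : ℕ, D (n + 1) ⊆ closedBall (u (n + 1)) (1 / ((n : ℝ) + 1)) := fun n =>
    hball n (u n)
  have hdiam : Tendsto (fun n => diam (D (n + 1))) atTop (𝓝 0) := by
    have hle : ∀ n : ℕ, diam (D (n + 1)) ≤ 2 * (1 / ((n : ℝ) + 1)) := fun n =>
      (diam_mono (hD n) isBounded_closedBall).trans (diam_closedBall Nat.one_div_pos_of_nat.le)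
    refine squeeze_zero (fun _ => diam_nonneg) hle ?_
    simpa using (tendsto_one_div_add_atTop_nhds_zero_nat (𝕜 := ℝ)).const_mul 2
  obtain ⟨y, hy⟩ := nonempty_iInter_of_nonempty_biInter
    (fun n => isClosed_descentSet (x := u (n + 1)) hφ)
    (fun n => isBounded_closedBall.subset (hD n))
    (fun N => ⟨u (N + 1), mem_iInter₂.2 fun n hn =>
      hanti (Nat.succ_le_succ hn) self_mem_descentSet⟩) hdiam
  rw [mem_iInter] at hy
  refine ⟨y, hanti (Nat.zero_le (0 + 1)) (hy 0), fun z hzy => ?_⟩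
  by_contra! hz
  refine hzy (dist_le_zero.1 (ge_of_tendsto' hdiam fun n => ?_))
  exact dist_le_diam_of_mem (isBounded_closedBall.subset (hD n))
    (descentSet_subset_of_mem hκ.le (hy n) hz) (hy n)

end Ekeland

section Subgradient

/-- A **sandwich theorem**, obtained by separating the strict hypograph of `G` from the epigraph of
`H`. -/
theorem exists_affine_between {E : Type*} [AddCommGroup E] [Module ℝ E] [TopologicalSpace E]
    [IsTopologicalAddGroup E] [ContinuousSMul ℝ E] {G H : E → ℝ} (hG : ConcaveOn ℝ univ G)
    (hGc : Continuous G) (hH : ConvexOn ℝ univ H) (hGH : ∀ z, G z ≤ H z) :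
    ∃ (k : StrongDual ℝ E) (c : ℝ), ∀ z, G z ≤ k z + c ∧ k z + c ≤ H z := by
  have hs : Convex ℝ {p : E × ℝ | p.2 < G p.1} := by simpa using hG.convex_strict_hypograph
  have ht : Convex ℝ {p : E × ℝ | H p.1 ≤ p.2} := by simpa using hH.convex_epigraph
  have hdisj : Disjoint {p : E × ℝ | p.2 < G p.1} {p : E × ℝ | H p.1 ≤ p.2} :=
    disjoint_left.2 fun p hp hp' => ((hGH p.1).trans hp').not_gt hp
  obtain ⟨f, u, hfs, hft⟩ := geometric_hahn_banach_open hs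
    (isOpen_lt continuous_snd (hGc.comp continuous_fst)) ht hdisj
  let a : StrongDual ℝ E := f.comp (ContinuousLinearMap.inl ℝ E ℝ)
  let b : ℝ := f (0, 1)
  have hf : ∀ z r, f (z, r) = a z + r * b := fun z r => by
    have hzr : (z, r) = ContinuousLinearMap.inl ℝ E ℝ z + r • ((0 : E), (1 : ℝ)) := by simp
    rw [hzr, map_add, map_smul]
    rfl
  have hlt : ∀ z r, r < G z → a z + r * b < u := fun z r h => hf z r ▸ hfs (z, r) h
  have hle : ∀ z, u ≤ a z + H z * b := fun z => hf z (H z) ▸ hft (z, H z) (le_refl (H z))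
  have hb : 0 < b := by
    have hgap : 0 < (H 0 - (G 0 - 1)) * b := by linarith [hlt 0 (G 0 - 1) (by linarith), hle 0]
    exact pos_of_mul_pos_right hgap (by linarith [hGH 0])
  have hge : ∀ z, a z + G z * b ≤ u := fun z => by
    have hcont : Continuous fun r : ℝ => a z + r * b := by fun_prop
    exact le_of_tendsto (hcont.continuousWithinAt (s := Iio (G z)))
      (eventually_mem_nhdsWithin.mono fun r hr => (hlt z r hr).le)
  have heq : ∀ z, (-(b⁻¹ • a)) z + u / b = (u - a z) / b := fun z => by
    simp only [neg_apply, smul_apply, smul_eq_mul]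
    ring
  refine ⟨-(b⁻¹ • a), u / b, fun z => ?_⟩
  rw [heq, le_div_iff₀ hb, div_le_iff₀ hb]
  exact ⟨by linarith [hge z], by linarith [hle z]⟩

variable {X : Type*} [NormedAddCommGroup X] [NormedSpace ℝ X] {F : X → ℝ} {κ ρ : ℝ}

theorem exists_norm_le_isMinOn_sub (hF : ConvexOn ℝ univ F) (hκ : 0 ≤ κ) {y : X}
    (hy : ∀ z, F y ≤ F z + κ * ‖z - y‖) :
    ∃ k : StrongDual ℝ X, ‖k‖ ≤ κ ∧ IsMinOn (fun z => F z - k z) univ y := by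
  have hcone : ConcaveOn ℝ univ fun z => F y - κ * ‖z - y‖ := by
    have hdist : ConvexOn ℝ univ fun z => ‖z - y‖ := by
      simpa only [dist_eq_norm] using convexOn_univ_dist y
    exact (concaveOn_const _ convex_univ).sub (hdist.smul hκ)
  obtain ⟨k, c, hk⟩ := exists_affine_between hcone (by fun_prop) hF fun z => by linarith [hy z]
  have hky : k y + c = F y := le_antisymm (hk y).2 (by simpa using (hk y).1)
  have hlower : ∀ v, -(κ * ‖v‖) ≤ k v := fun v => by
    have hyv := (hk (y + v)).1
    rw [add_sub_cancel_left, map_add] at hyv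
    linarith
  refine ⟨k, k.opNorm_le_bound hκ fun v => abs_le.2 ⟨hlower v, ?_⟩,
    isMinOn_univ_iff.2 fun z => by linarith [(hk z).2]⟩
  have hneg := hlower (-v)
  rw [norm_neg, map_neg] at hneg
  linarith

/-- The **Brøndsted–Rockafellar theorem**, for a continuous convex function. -/
theorem exists_isMinOn_sub_of_isApproxMin_sub [CompleteSpace X] (hF : ConvexOn ℝ univ F)
    (hFc : Continuous F) (hκ : 0 < κ) {g : StrongDual ℝ X} {y : X}
    (hy : IsApproxMin (fun z => F z - g z) (κ ^ 2) y) :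
    ∃ (x : X) (k : StrongDual ℝ X), ‖x - y‖ ≤ κ ∧ ‖k - g‖ ≤ κ ∧
      IsMinOn (fun z => F z - k z) univ x := by
  obtain ⟨x, hxy, hx⟩ := exists_forall_lt_add_mul_dist (φ := fun z => F z - g z)
    (Continuous.lowerSemicontinuous (by fun_prop))
    ⟨F y - g y - κ ^ 2, forall_mem_range.2 fun z => sub_le_iff_le_add.2 (hy z)⟩ hκ y
  have hx' : ∀ z, F x - g x ≤ F z - g z + κ * ‖z - x‖ := fun z => by
    rcases eq_or_ne z x with rfl | hzx
    · simp
    · simpa only [dist_eq_norm] using (hx z hzx).le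
  obtain ⟨k, hk, hmin⟩ := exists_norm_le_isMinOn_sub
    (hF.sub (g.toLinearMap.concaveOn convex_univ)) hκ.le hx'
  refine ⟨x, g + k, le_of_mul_le_mul_left ?_ hκ, by simpa using hk, ?_⟩
  · rw [← dist_eq_norm]
    linarith [hy x]
  · simpa only [add_apply, sub_sub, Pi.sub_apply, ContinuousLinearMap.coe_coe] using hmin

/-- The points at which `F` has a subgradient of norm less than `ρ`. -/
def subgradientPoints (F : X → ℝ) (ρ : ℝ) : Set X :=
  {x | ∃ g : StrongDual ℝ X, ‖g‖ < ρ ∧ IsMinOn (fun z => F z - g z) univ x}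

theorem exists_mem_subgradientPoints_dist_le [CompleteSpace X] (hF : ConvexOn ℝ univ F)
    (hFc : Continuous F) (hκ : 0 < κ) {g : StrongDual ℝ X} (hg : ‖g‖ + κ < ρ) {y : X}
    (hy : IsApproxMin (fun z => F z - g z) (κ ^ 2) y) :
    ∃ x ∈ subgradientPoints F ρ, dist y x ≤ κ := by
  obtain ⟨x, k, hxy, hkg, hmin⟩ := exists_isMinOn_sub_of_isApproxMin_sub hF hFc hκ hy
  refine ⟨x, ⟨k, ?_, hmin⟩, by rwa [dist_comm, dist_eq_norm]⟩
  linarith [norm_le_norm_add_norm_sub' k g]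

end Subgradient

section Biconjugate

variable {X : Type*} [NormedAddCommGroup X] [NormedSpace ℝ X] {ι : Type*} {u : ι → X} {q : ι → ℝ}
  {ρ : ℝ}

/-- The Legendre–Fenchel conjugate of the function taking the value `q i` at `u i` for each `i` and
`∞` elsewhere. -/
noncomputable def fenchelConjugate (u : ι → X) (q : ι → ℝ) (g : StrongDual ℝ X) : ℝ :=
  ⨆ i, (g (u i) - q i)

/-- The biconjugate of the function taking the value `q i` at `u i` for each `i` and `∞` elsewhere,
with the outer supremum restricted to functionals of norm less than `ρ` in order to be Lipschitz. -/
noncomputable def truncatedBiconjugate (u : ι → X) (q : ι → ℝ) (ρ : ℝ) (z : X) : ℝ :=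
  ⨆ g : ball (0 : StrongDual ℝ X) ρ, (g.1 z - fenchelConjugate u q g.1)

theorem exists_forall_abs_apply_le (hu : IsBounded (range u)) :
    ∃ R > 0, ∀ (g : StrongDual ℝ X) i, |g (u i)| ≤ ‖g‖ * R := by
  obtain ⟨R, hR, huR⟩ := hu.exists_pos_norm_le
  exact ⟨R, hR, fun g i => g.le_opNorm_of_le (huR _ (mem_range_self i))⟩

theorem bddBelow_range_sub_apply (hu : IsBounded (range u)) (hq : BddBelow (range q))
    (g : StrongDual ℝ X) : BddBelow (range fun i => q i - g (u i)) := by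
  obtain ⟨R, -, hR⟩ := exists_forall_abs_apply_le hu
  obtain ⟨m, hm⟩ := hq
  refine ⟨m - ‖g‖ * R, forall_mem_range.2 fun i => ?_⟩
  linarith [hm (mem_range_self i), (abs_le.1 (hR g i)).2]

theorem sub_le_fenchelConjugate (hu : IsBounded (range u)) (hq : BddBelow (range q))
    (g : StrongDual ℝ X) (i : ι) : g (u i) - q i ≤ fenchelConjugate u q g := by
  refine le_ciSup (f := fun i => g (u i) - q i) ?_ i
  obtain ⟨m, hm⟩ := bddBelow_range_sub_apply hu hq g
  exact ⟨-m, forall_mem_range.2 fun j => by linarith [hm (mem_range_self j)]⟩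

theorem apply_le_mul_norm_of_mem_ball {g : StrongDual ℝ X} (hg : g ∈ ball 0 ρ) (v : X) :
    g v ≤ ρ * ‖v‖ :=
  (le_abs_self _).trans (g.le_of_opNorm_le (mem_ball_zero_iff.1 hg).le v)

theorem truncatedBiconjugate_le (hu : IsBounded (range u)) (hq : BddBelow (range q)) (hρ : 0 < ρ)
    (i : ι) : truncatedBiconjugate u q ρ (u i) ≤ q i := by
  have : Nonempty (ball (0 : StrongDual ℝ X) ρ) := (nonempty_ball.2 hρ).to_subtype
  exact ciSup_le fun g => by linarith [sub_le_fenchelConjugate hu hq g.1 i]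

variable [Nonempty ι]

theorem sub_fenchelConjugate_le_truncatedBiconjugate (hu : IsBounded (range u))
    (hq : BddBelow (range q)) {g : StrongDual ℝ X} (hg : g ∈ ball 0 ρ) (z : X) :
    g z - fenchelConjugate u q g ≤ truncatedBiconjugate u q ρ z := by
  let i : ι := Classical.arbitrary ι
  refine le_ciSup (f := fun g : ball (0 : StrongDual ℝ X) ρ => g.1 z - fenchelConjugate u q g.1)
    ⟨ρ * ‖z - u i‖ + q i, forall_mem_range.2 fun k => ?_⟩ ⟨g, hg⟩
  have hkz := apply_le_mul_norm_of_mem_ball k.2 (z - u i)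
  rw [map_sub] at hkz
  linarith [sub_le_fenchelConjugate hu hq k.1 i]

theorem convexOn_truncatedBiconjugate (hu : IsBounded (range u)) (hq : BddBelow (range q))
    (hρ : 0 < ρ) : ConvexOn ℝ univ (truncatedBiconjugate u q ρ) := by
  have : Nonempty (ball (0 : StrongDual ℝ X) ρ) := (nonempty_ball.2 hρ).to_subtype
  refine ⟨convex_univ, fun x _ y _ a b ha hb hab => ciSup_le fun g => ?_⟩
  calc g.1 (a • x + b • y) - fenchelConjugate u q g.1
      = a * (g.1 x - fenchelConjugate u q g.1) + b * (g.1 y - fenchelConjugate u q g.1) := by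
        simp only [map_add, map_smul, smul_eq_mul]
        linear_combination fenchelConjugate u q g.1 * hab
    _ ≤ a * truncatedBiconjugate u q ρ x + b * truncatedBiconjugate u q ρ y := by
        gcongr <;> exact sub_fenchelConjugate_le_truncatedBiconjugate hu hq g.2 _

theorem lipschitzWith_truncatedBiconjugate (hu : IsBounded (range u)) (hq : BddBelow (range q))
    (hρ : 0 < ρ) : LipschitzWith ρ.toNNReal (truncatedBiconjugate u q ρ) := by
  have : Nonempty (ball (0 : StrongDual ℝ X) ρ) := (nonempty_ball.2 hρ).to_subtype
  refine LipschitzWith.of_le_add_mul _ fun x y => ciSup_le fun g => ?_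
  have hxy := apply_le_mul_norm_of_mem_ball g.2 (x - y)
  rw [map_sub] at hxy
  rw [Real.coe_toNNReal ρ hρ.le, dist_eq_norm]
  linarith [sub_fenchelConjugate_le_truncatedBiconjugate hu hq g.2 y]

theorem IsApproxMin.truncatedBiconjugate_sub (hu : IsBounded (range u)) (hq : BddBelow (range q))
    {g : StrongDual ℝ X} (hg : ‖g‖ < ρ) {δ : ℝ} {i : ι}
    (hi : IsApproxMin (fun j => q j - g (u j)) δ i) :
    IsApproxMin (fun z => truncatedBiconjugate u q ρ z - g z) δ (u i) := fun z => by
  have hconj : fenchelConjugate u q g ≤ g (u i) - q i + δ := ciSup_le fun j => by linarith [hi j]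
  linarith [truncatedBiconjugate_le hu hq ((norm_nonneg g).trans_lt hg) i,
    sub_fenchelConjugate_le_truncatedBiconjugate hu hq (mem_ball_zero_iff.2 hg) z]

end Biconjugate

section Stegall

variable {X : Type*} [NormedAddCommGroup X] [NormedSpace ℝ X]

theorem HasRNP.exists_slice_subset_ball (hX : HasRNP X) {S : Set X} (hS : S.Nonempty)
    (hSb : IsBounded S) {ε : ℝ} (hε : 0 < ε) :
    ∃ x ∈ S, ∃ (h : StrongDual ℝ X) (α : ℝ), α < h x ∧ S ∩ {y | α ≤ h y} ⊆ ball x ε := by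
  obtain ⟨x, hxS, hx⟩ := hX S hS hSb ε hε
  obtain ⟨h, α, hα, hαx⟩ :=
    geometric_hahn_banach_closed_point (convex_convexHull ℝ _).closure isClosed_closure hx
  refine ⟨x, hxS, h, α, hαx, fun y ⟨hyS, hy⟩ => ?_⟩
  by_contra hball
  exact (hα y (subset_closure (subset_convexHull ℝ _ ⟨hyS, hball⟩))).not_ge hy

section Convex

variable [CompleteSpace X] {F : X → ℝ} {ρ ε : ℝ}

/-- The functional `g'` is a small perturbation of the subgradient `g` in the direction `h`. -/
theorem exists_isApproxMin_near_slice (hF : ConvexOn ℝ univ F) (hFc : Continuous F)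
    {g h : StrongDual ℝ X} (hg : ‖g‖ < ρ) {x : X} (hx : IsMinOn (fun z => F z - g z) univ x)
    {α : ℝ} (hα : α < h x) (hε : 0 < ε) :
    ∃ g' : StrongDual ℝ X, ‖g'‖ < ρ ∧ ∃ δ > 0, ∀ y, IsApproxMin (fun z => F z - g' z) δ y →
      ∃ w ∈ subgradientPoints F ρ, α ≤ h w ∧ dist y w < ε := by
  obtain ⟨t, htρ, ht⟩ : ∃ t : ℝ, ‖g + t • h‖ < ρ ∧ 0 < t := by
    have hnorm : ContinuousAt (fun t : ℝ => ‖g + t • h‖) 0 := by fun_prop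
    have hsmall : ∀ᶠ t in 𝓝 (0 : ℝ), ‖g + t • h‖ < ρ :=
      hnorm.eventually_lt_const (by simpa using hg)
    exact ((hsmall.filter_mono nhdsWithin_le_nhds).and
      (self_mem_nhdsWithin (a := (0 : ℝ)) (s := Ioi 0))).exists
  obtain ⟨κ, ⟨hκε, hκρ, hκα⟩, hκ⟩ : ∃ κ : ℝ, (κ < ε ∧ ‖g + t • h‖ + κ < ρ ∧
      κ ^ 2 / t + ‖h‖ * κ < h x - α) ∧ 0 < κ := by
    have hnorm : ContinuousAt (fun κ : ℝ => ‖g + t • h‖ + κ) 0 := by fun_prop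
    have hdepth : ContinuousAt (fun κ : ℝ => κ ^ 2 / t + ‖h‖ * κ) 0 := by fun_prop
    have hsmall : ∀ᶠ κ in 𝓝 (0 : ℝ), κ < ε ∧ ‖g + t • h‖ + κ < ρ ∧
        κ ^ 2 / t + ‖h‖ * κ < h x - α :=
      (eventually_lt_nhds hε).and ((hnorm.eventually_lt_const (by simpa using htρ)).and
        (hdepth.eventually_lt_const (by simpa using hα)))
    exact ((hsmall.filter_mono nhdsWithin_le_nhds).and
      (self_mem_nhdsWithin (a := (0 : ℝ)) (s := Ioi 0))).exists
  refine ⟨g + t • h, htρ, κ ^ 2, by positivity, fun y hy => ?_⟩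
  obtain ⟨w, hw, hyw⟩ := exists_mem_subgradientPoints_dist_le hF hFc hκ hκρ hy
  refine ⟨w, hw, ?_, hyw.trans_lt hκε⟩
  have hhy : h x - κ ^ 2 / t ≤ h y := by
    refine IsApproxMin.sub_div_le_of_isMinOn ?_ hx ht
    simpa only [add_apply, smul_apply, smul_eq_mul, sub_sub] using hy
  have hhw : h y - h w ≤ ‖h‖ * κ := by
    rw [← map_sub]
    exact (le_abs_self _).trans (h.le_opNorm_of_le (by rwa [← dist_eq_norm]))
  linarith

theorem HasRNP.exists_isApproxMin_subset_ball (hX : HasRNP X) (hF : ConvexOn ℝ univ F)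
    (hFc : Continuous F) {D : Set X} (hD : IsBounded D) (hρ : 0 < ρ) (hε : 0 < ε) :
    ∃ g : StrongDual ℝ X, ‖g‖ < ρ ∧ ∃ δ > 0, ∃ x,
      D ∩ {y | IsApproxMin (fun z => F z - g z) δ y} ⊆ ball x ε := by
  let A : Set X := cthickening 1 D ∩ subgradientPoints F ρ
  have hA : ∀ y ∈ D, ∀ w ∈ subgradientPoints F ρ, dist y w ≤ 1 → w ∈ A := fun y hy w hw hyw =>
    ⟨mem_cthickening_of_dist_le w y 1 D hy (by rwa [dist_comm]), hw⟩
  rcases A.eq_empty_or_nonempty with hA₀ | hA₀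
  · obtain ⟨κ, hκ, hκρ⟩ := exists_between (lt_min one_pos hρ)
    obtain ⟨hκ1, hκρ⟩ := lt_min_iff.1 hκρ
    refine ⟨0, by simpa using hρ, κ ^ 2, by positivity, 0, fun y ⟨hyD, hy⟩ => ?_⟩
    obtain ⟨w, hw, hyw⟩ :=
      exists_mem_subgradientPoints_dist_le hF hFc hκ (ρ := ρ) (by simpa using hκρ) hy
    exact absurd (hA y hyD w hw (hyw.trans hκ1.le)) (hA₀ ▸ notMem_empty w)
  · obtain ⟨x, ⟨-, g, hg, hgx⟩, h, α, hα, hslice⟩ :=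
      hX.exists_slice_subset_ball hA₀ (hD.cthickening.subset inter_subset_left) (half_pos hε)
    obtain ⟨g', hg', δ, hδ, hnear⟩ := exists_isApproxMin_near_slice hF hFc hg hgx hα
      (lt_min one_pos (half_pos hε))
    refine ⟨g', hg', δ, hδ, x, fun y ⟨hyD, hy⟩ => ?_⟩
    obtain ⟨w, hw, hαw, hyw⟩ := hnear y hy
    obtain ⟨hyw1, hywε⟩ := lt_min_iff.1 hyw
    have hwx : dist w x < ε / 2 := hslice ⟨hA y hyD w hw hyw1.le, hαw⟩
    rw [mem_ball]
    linarith [dist_triangle y w x]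

end Convex

section Family

variable {ι : Type*} {u : ι → X} {q : ι → ℝ}

/-- The functionals `g` for which all `u i` with `i` a sufficiently good approximate minimizer of
`q - g ∘ u` lie in one ball of radius `r`. -/
def localizingFunctionals (u : ι → X) (q : ι → ℝ) (r : ℝ) : Set (StrongDual ℝ X) :=
  {g | ∃ δ > 0, ∃ x, ∀ i, IsApproxMin (fun j => q j - g (u j)) δ i → u i ∈ ball x r}

theorem isOpen_localizingFunctionals (hu : IsBounded (range u)) (r : ℝ) :
    IsOpen (localizingFunctionals u q r) := by
  obtain ⟨R, hR, huR⟩ := exists_forall_abs_apply_le hu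
  rw [Metric.isOpen_iff]
  rintro g ⟨δ, hδ, x, hx⟩
  refine ⟨δ / (4 * R), by positivity, fun g' hg' => ⟨δ / 2, by positivity, x, fun i hi => hx i ?_⟩⟩
  have hclose : ∀ j, |(q j - g' (u j)) - (q j - g (u j))| ≤ δ / 4 := fun j => by
    rw [mem_ball', dist_eq_norm, lt_div_iff₀ (by positivity)] at hg'
    have hj := huR (g - g') j
    rw [sub_apply] at hj
    rw [sub_sub_sub_cancel_left]
    linarith
  have hiδ : IsApproxMin (fun j => q j - g (u j)) (δ / 2 + 2 * (δ / 4)) i :=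
    IsApproxMin.of_abs_sub_le hi hclose
  rwa [show δ / 2 + 2 * (δ / 4) = δ by ring] at hiδ

variable [Nonempty ι] [CompleteSpace X]

theorem HasRNP.dense_localizingFunctionals (hX : HasRNP X) (hu : IsBounded (range u))
    (hq : BddBelow (range q)) {r : ℝ} (hr : 0 < r) : Dense (localizingFunctionals u q r) := by
  rw [Metric.dense_iff]
  intro g₀ ρ hρ
  have hq₀ := bddBelow_range_sub_apply hu hq g₀
  obtain ⟨g, hg, δ, hδ, x, hx⟩ := hX.exists_isApproxMin_subset_ball
    (convexOn_truncatedBiconjugate hu hq₀ hρ)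
    (lipschitzWith_truncatedBiconjugate hu hq₀ hρ).continuous hu hρ hr
  refine ⟨g₀ + g, by simpa [dist_eq_norm] using hg, δ, hδ, x, fun i hi => hx ⟨mem_range_self i, ?_⟩⟩
  exact IsApproxMin.truncatedBiconjugate_sub hu hq₀ hg
    (by simpa only [add_apply, sub_sub] using hi)

/-- **Stegall's variational principle**, for a bounded family of points. -/
theorem HasRNP.dense_setOf_tendsto_minimizing (hX : HasRNP X) (hu : IsBounded (range u))
    (hq : BddBelow (range q)) :
    Dense {g : StrongDual ℝ X | ∃ a, Tendsto u (minimizing fun i => q i - g (u i)) (𝓝 a)} := by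
  refine (dense_iInter_of_isOpen_nat
    (fun n => isOpen_localizingFunctionals (q := q) hu (1 / ((n : ℝ) + 1)))
    fun n => hX.dense_localizingFunctionals hu hq Nat.one_div_pos_of_nat).mono fun g hg => ?_
  rw [mem_iInter] at hg
  have hbdd := bddBelow_range_sub_apply hu hq g
  have := minimizing_neBot hbdd
  refine CompleteSpace.complete (Metric.cauchy_iff.2 ⟨inferInstance, fun ε hε => ?_⟩)
  obtain ⟨n, hn⟩ := exists_nat_one_div_lt (half_pos hε)
  obtain ⟨δ, hδ, x, hx⟩ := hg n
  refine ⟨ball x (1 / ((n : ℝ) + 1)),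
    mem_map.2 (mem_of_superset ((hasBasis_minimizing hbdd).mem_of_mem hδ) hx), fun y hy z hz => ?_⟩
  rw [mem_ball] at hy hz
  linarith [dist_triangle_right y z x]

end Family

end Stegall

section WeakStar

variable {𝕜 : Type*} [RCLike 𝕜] {X : Type*} [NormedAddCommGroup X] [NormedSpace 𝕜 X] {ι : Type*}
  {L : Filter ι} {f : ι → StrongDual 𝕜 X} {k : StrongDual 𝕜 X} {R : ℝ}

theorem exists_ultrafilter_tendsto_apply [L.NeBot] (hf : ∀ i, ‖f i‖ ≤ R) :
    ∃ (U : Ultrafilter ι) (k : StrongDual 𝕜 X), ↑U ≤ L ∧ ‖k‖ ≤ R ∧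
      ∀ v, Tendsto (fun i => f i v) U (𝓝 (k v)) := by
  obtain ⟨k, hk, hfk⟩ :=
    (WeakDual.isCompact_closedBall (𝕜 := 𝕜) (E := X) 0 R).ultrafilter_le_nhds'
      ((Ultrafilter.of L).map fun i => StrongDual.toWeakDual (f i))
      (Eventually.of_forall (f := (Ultrafilter.of L : Filter ι)) fun i => by simpa using hf i)
  exact ⟨Ultrafilter.of L, WeakDual.toStrongDual k, Ultrafilter.of_le L, by simpa using hk,
    fun v => ((WeakDual.eval_continuous v).tendsto k).comp hfk⟩

theorem tendsto_apply_apply_of_norm_le (hf : ∀ i, ‖f i‖ ≤ R)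
    (hfk : ∀ v, Tendsto (fun i => f i v) L (𝓝 (k v))) {y : ι → X} {a : X}
    (hy : Tendsto y L (𝓝 a)) : Tendsto (fun i => f i (y i)) L (𝓝 (k a)) := by
  have hdiff : Tendsto (fun i => f i (y i - a)) L (𝓝 0) :=
    squeeze_zero_norm (fun i => (f i).le_of_opNorm_le (hf i) (y i - a))
      (by simpa using (tendsto_iff_norm_sub_tendsto_zero.1 hy).const_mul R)
  simpa using hdiff.add (hfk a)

end WeakStar

section Crawford

variable {𝕜 : Type*} [RCLike 𝕜] {X : Type*} [NormedAddCommGroup X] [NormedSpace 𝕜 X]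

variable (𝕜 X) in
/-- The set `Π(X)` of unit vectors paired with their norming functionals. -/
def normingPairs : Set (X × StrongDual 𝕜 X) :=
  {p | ‖p.1‖ = 1 ∧ ‖p.2‖ = 1 ∧ p.2 p.1 = 1}

theorem normingPairs_nonempty [Nontrivial X] : (normingPairs 𝕜 X).Nonempty := by
  obtain ⟨v, hv⟩ := exists_ne (0 : X)
  have hx : ‖((‖v‖⁻¹ : ℝ) : 𝕜) • v‖ = 1 := by simp [norm_smul, hv]
  obtain ⟨f, hf, hfx⟩ := exists_dual_vector' 𝕜 (((‖v‖⁻¹ : ℝ) : 𝕜) • v)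
  exact ⟨(_, f), hx, hf, by rw [hfx, hx, RCLike.ofReal_one]⟩

theorem smul_mem_normingPairs {p : X × StrongDual 𝕜 X} (hp : p ∈ normingPairs 𝕜 X) {c : 𝕜}
    (hc : ‖c‖ = 1) : (c • p.1, c⁻¹ • p.2) ∈ normingPairs 𝕜 X := by
  obtain ⟨hx, hf, hfx⟩ := hp
  have hc0 : c ≠ 0 := norm_ne_zero_iff.1 (hc ▸ one_ne_zero)
  exact ⟨by simp [norm_smul, hc, hx], by simp [norm_smul, hc, hf], by simp [hc0, hfx]⟩

theorem exists_mem_normingPairs_of_tendsto {L : Filter (normingPairs 𝕜 X)} [L.NeBot]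
    (T : X →L[𝕜] X) {a : X} (ha : Tendsto (fun p : normingPairs 𝕜 X => p.1.1) L (𝓝 a)) {c : ℝ}
    (hc : Tendsto (fun p : normingPairs 𝕜 X => ‖p.1.2 (T p.1.1)‖) L (𝓝 c)) :
    ∃ k, (a, k) ∈ normingPairs 𝕜 X ∧ ‖k (T a)‖ = c := by
  have hnorm : ∀ p : normingPairs 𝕜 X, ‖p.1.2‖ ≤ 1 := fun p => p.2.2.1.le
  obtain ⟨U, k, hUL, hk, hlim⟩ := exists_ultrafilter_tendsto_apply (L := L) hnorm
  have haU := ha.mono_left hUL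
  have ha1 : ‖a‖ = 1 := tendsto_nhds_unique haU.norm
    (tendsto_const_nhds.congr fun p => p.2.1.symm)
  have hka : k a = 1 := tendsto_nhds_unique (tendsto_apply_apply_of_norm_le hnorm hlim haU)
    (tendsto_const_nhds.congr fun p => p.2.2.2.symm)
  refine ⟨k, ⟨ha1, hk.antisymm ?_, hka⟩, ?_⟩
  · simpa [hka, ha1] using k.le_opNorm a
  · exact tendsto_nhds_unique (tendsto_apply_apply_of_norm_le hnorm hlim
      ((T.continuous.tendsto a).comp haU)).norm (hc.mono_left hUL)

theorem exists_isMinOn_of_tendsto_minimizing [Nontrivial X] [NormedSpace ℝ X] (T : X →L[𝕜] X)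
    (g : StrongDual ℝ X) {a : X}
    (ha : Tendsto (fun p : normingPairs 𝕜 X => p.1.1)
      (minimizing fun p => ‖p.1.2 (T p.1.1)‖ - g p.1.1) (𝓝 a)) :
    ∃ k, (a, k) ∈ normingPairs 𝕜 X ∧
      IsMinOn (fun p => ‖p.2 (T p.1)‖ - g p.1) (normingPairs 𝕜 X) (a, k) := by
  let φ : normingPairs 𝕜 X → ℝ := fun p => ‖p.1.2 (T p.1.1)‖ - g p.1.1
  have : Nonempty (normingPairs 𝕜 X) := normingPairs_nonempty.to_subtype
  have hφ : BddBelow (range φ) := ⟨-‖g‖, forall_mem_range.2 fun p => by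
    have hg := (abs_le.1 (g.le_opNorm_of_le p.2.1.le)).2
    linarith [norm_nonneg (p.1.2 (T p.1.1))]⟩
  have := minimizing_neBot hφ
  have hlim : Tendsto (fun p => φ p + g p.1.1) (minimizing φ) (𝓝 ((⨅ p, φ p) + g a)) :=
    tendsto_comap.add ((g.continuous.tendsto a).comp ha)
  obtain ⟨k, hk, hka⟩ := exists_mem_normingPairs_of_tendsto T ha (by simpa [φ] using hlim)
  refine ⟨k, hk, isMinOn_iff.2 fun p hp => ?_⟩
  simpa [hka] using ciInf_le hφ ⟨p, hp⟩

theorem isMinOn_sub_norm_of_isMinOn_sub_re {T : X →L[𝕜] X} {z : StrongDual 𝕜 X}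
    {p : X × StrongDual 𝕜 X}
    (hp : IsMinOn (fun p => ‖p.2 (T p.1)‖ - RCLike.re (z p.1)) (normingPairs 𝕜 X) p) :
    IsMinOn (fun p => ‖p.2 (T p.1)‖ - ‖z p.1‖) (normingPairs 𝕜 X) p := by
  refine isMinOn_iff.2 fun r hr => ?_
  obtain ⟨c, hc, hcz⟩ := RCLike.exists_norm_eq_mul_self (z r.1)
  have hc0 : c ≠ 0 := norm_ne_zero_iff.1 (hc ▸ one_ne_zero)
  calc ‖p.2 (T p.1)‖ - ‖z p.1‖
      ≤ ‖p.2 (T p.1)‖ - RCLike.re (z p.1) := by gcongr; exact RCLike.re_le_norm _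
    _ ≤ ‖(c⁻¹ • r.2) (T (c • r.1))‖ - RCLike.re (z (c • r.1)) :=
        isMinOn_iff.1 hp _ (smul_mem_normingPairs hr hc)
    _ = ‖r.2 (T r.1)‖ - ‖z r.1‖ := by
        rw [map_smul z, smul_eq_mul, ← hcz, RCLike.ofReal_re]
        simp [hc0]

theorem crawfordAttains_of_isMinOn {T : X →L[𝕜] X} {p : X × StrongDual 𝕜 X}
    (hp : p ∈ normingPairs 𝕜 X)
    (hmin : IsMinOn (fun p => ‖p.2 (T p.1)‖) (normingPairs 𝕜 X) p) : CrawfordAttains T := by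
  obtain ⟨hx, hf, hfx⟩ := hp
  refine ⟨p.1, p.2, hx, hf, hfx, IsLeast.csInf_eq ⟨⟨p.1, p.2, hx, hf, hfx, rfl⟩, ?_⟩⟩
  rintro _ ⟨y, k, hy, hk, hky, rfl⟩
  exact isMinOn_iff.1 hmin (y, k) ⟨hy, hk, hky⟩

/-- The multiple `b * l` is the point of the ball of radius `‖b‖` closest to `a`. -/
theorem exists_norm_le_one_norm_sub_mul_eq (a b : 𝕜) :
    ∃ l : 𝕜, ‖l‖ ≤ 1 ∧ ‖a - b * l‖ = max (‖a‖ - ‖b‖) 0 := by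
  rcases eq_or_ne b 0 with rfl | hb
  · exact ⟨0, by simp⟩
  rcases le_total ‖a‖ ‖b‖ with hab | hab
  · refine ⟨a / b, by rw [norm_div]; exact div_le_one_of_le₀ hab (norm_nonneg b), ?_⟩
    simp [mul_div_cancel₀ _ hb, hab]
  · have ha : 0 < ‖a‖ := (norm_pos_iff.2 hb).trans_le hab
    have hsub : a - b * (((‖b‖ / ‖a‖ : ℝ) : 𝕜) * a / b) = ((1 - ‖b‖ / ‖a‖ : ℝ) : 𝕜) * a := by
      rw [mul_div_cancel₀ _ hb]
      push_cast
      ring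
    refine ⟨((‖b‖ / ‖a‖ : ℝ) : 𝕜) * a / b, ?_, ?_⟩
    · simp [hb, ha.ne']
    · rw [hsub, norm_mul, RCLike.norm_of_nonneg (sub_nonneg.2 (div_le_one_of_le₀ hab ha.le)),
        sub_mul, one_mul, div_mul_cancel₀ _ ha.ne', max_eq_left (sub_nonneg.2 hab)]

theorem exists_crawfordAttains_of_isMinOn (T : X →L[𝕜] X) (z : StrongDual 𝕜 X)
    {p : X × StrongDual 𝕜 X} (hp : p ∈ normingPairs 𝕜 X)
    (hmin : IsMinOn (fun p => ‖p.2 (T p.1)‖ - ‖z p.1‖) (normingPairs 𝕜 X) p) :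
    ∃ S : X →L[𝕜] X, ‖S - T‖ ≤ ‖z‖ ∧ CrawfordAttains S := by
  obtain ⟨a, k⟩ := p
  obtain ⟨ha, -, hka⟩ := id hp
  obtain ⟨l, hl, hmax⟩ := exists_norm_le_one_norm_sub_mul_eq (k (T a)) (z a)
  have hla : ‖l • a‖ ≤ 1 := by rwa [norm_smul, ha, mul_one]
  refine ⟨T - z.smulRight (l • a), ?_, crawfordAttains_of_isMinOn hp (isMinOn_iff.2 ?_)⟩
  · rw [sub_sub_cancel_left, norm_neg, ContinuousLinearMap.norm_smulRight_apply]
    exact mul_le_of_le_one_right (norm_nonneg z) hla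
  rintro ⟨y, f⟩ hyf
  have hfl : ‖f (l • a)‖ ≤ 1 := by simpa [hyf.2.1] using f.le_opNorm_of_le hla
  calc ‖k ((T - z.smulRight (l • a)) a)‖
      = max (‖k (T a)‖ - ‖z a‖) 0 := by rw [← hmax]; simp [hka]
    _ ≤ max (‖f (T y)‖ - ‖z y‖) 0 := max_le_max_right 0 (isMinOn_iff.1 hmin (y, f) hyf)
    _ ≤ max (‖f (T y)‖ - ‖z y * f (l • a)‖) 0 := by
        rw [norm_mul]
        gcongr
        exact mul_le_of_le_one_right (norm_nonneg _) hfl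
    _ ≤ ‖f (T y) - z y * f (l • a)‖ := max_le (norm_sub_norm_le _ _) (norm_nonneg _)
    _ = ‖f ((T - z.smulRight (l • a)) y)‖ := by simp

end Crawford

theorem crawford_attaining_dense_of_RNP
    {𝕜 : Type*} [RCLike 𝕜] {X : Type*} [NormedAddCommGroup X] [NormedSpace 𝕜 X]
    [NormedSpace ℝ X] [IsScalarTower ℝ 𝕜 X]
    [CompleteSpace X] [Nontrivial X] (hRNP : HasRNP X) :
    ∀ (T : X →L[𝕜] X) (ε : ℝ), 0 < ε →
      ∃ S : X →L[𝕜] X, ‖S - T‖ < ε ∧ CrawfordAttains S := by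
  intro T ε hε
  have : Nonempty (normingPairs 𝕜 X) := normingPairs_nonempty.to_subtype
  have hunit : IsBounded (range fun p : normingPairs 𝕜 X => p.1.1) :=
    isBounded_iff_forall_norm_le.2 ⟨1, forall_mem_range.2 fun p => p.2.1.le⟩
  have hnonneg : BddBelow (range fun p : normingPairs 𝕜 X => ‖p.1.2 (T p.1.1)‖) :=
    ⟨0, forall_mem_range.2 fun _ => norm_nonneg _⟩
  obtain ⟨g, ⟨a, ha⟩, hg⟩ :=
    (hRNP.dense_setOf_tendsto_minimizing hunit hnonneg).exists_dist_lt 0 hε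
  obtain ⟨k, hk, hmin⟩ := exists_isMinOn_of_tendsto_minimizing T g ha
  let z : StrongDual 𝕜 X := g.extendRCLike
  obtain ⟨S, hST, hS⟩ := exists_crawfordAttains_of_isMinOn T z hk
    (isMinOn_sub_norm_of_isMinOn_sub_re
      (by simpa only [z, StrongDual.re_extendRCLike_apply] using hmin))
  have hz : ‖z‖ < ε := by simpa [z, StrongDual.norm_extendRCLike] using hg
  exact ⟨S, hST.trans_lt hz, hS⟩
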